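/- arXiv:1801.10436 — 2 statements merged into one kernel-verified Lean document; each statement's English description precedes it below -/
import Mathlib

section
/- Let P = (Q,Σ,δ) be a carefully synchronizing PFA with |Q| = n and |Σ| = m whose shortest carefully synchronizing word has length f. Assume s ∈ Σ and Q' ⊆ Q satisfy: (1) s is a complete symbol (qs is defined for all q ∈ Q) and there is a number p such that every symbol of Σ is defined on every state of Qs^p; (2) qs = q for all q ∈ Q'; (3) qa = qb (both defined or both undefined, and equal when defined) for all q ∈ Q' and all a, b ∈ Σ∖{s}. Let n' = n − |Q'|. Then there exists a carefully synchronizing PFA on n + n'·(m−2) states over a 2-symbol alphabet whose shortest carefully synchronizing word has length at least f; moreover the new PFA can be taken deterministic if P is deterministic, and transitive if P is transitive. -/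
/-- One step of a PFA on an `Option` state. -/
def pfaStep {Q σ : Type*} (δ : Q → σ → Option Q) (o : Option Q) (a : σ) : Option Q :=
  o.bind fun q => δ q a

/-- The (partial) state reached from `q` after reading word `w` in the PFA `δ`. -/
def pfaRun {Q σ : Type*} (δ : Q → σ → Option Q) (q : Q) (w : List σ) : Option Q :=
  w.foldl (pfaStep δ) (some q)

/-- A word `w` is carefully synchronizing for the PFA `δ`. -/
def IsCareSyncWord {Q σ : Type*} (δ : Q → σ → Option Q) (w : List σ) : Prop :=
  ∃ qs : Q, ∀ q : Q, pfaRun δ q w = some qs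

/-- A PFA is transitive if every state can be reached from every state by some word. -/
def PFATransitive {Q σ : Type*} (δ : Q → σ → Option Q) : Prop :=
  ∀ q q' : Q, ∃ w : List σ, pfaRun δ q w = some q'

/-!
The new PFA enumerates the symbols other than `s` as `a 0, …, a K` and equips each state with a
counter `i ≤ K`. Symbol `0` advances the counter, applying `s` when it wraps around, and symbol `1`
applies `a i` and resets the counter, so `0 ^ i 1` simulates `a i` and `0 ^ (K + 1)` simulates `s`.
On `Q'` the value of the counter makes no difference, so there it can be dropped, which leaves `K`
extra copies of the complement of `Q'`.

A word read from counter `0` decodes to a word over `Σ` that is no longer. Conversely,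
`0 ^ ((K + 1) * p)` acts as `s ^ p` whatever the counter, after which a single `1` is defined
everywhere and resets all counters, and any synchronizing word of the old PFA can be simulated.
-/

section Run

variable {Q S σ : Type*} (δ : Q → σ → Option Q)

theorem pfaRun_append (q : Q) (u v : List σ) :
    pfaRun δ q (u ++ v) = (pfaRun δ q u).bind (pfaRun δ · v) := by
  have foldl_none (w : List σ) : w.foldl (pfaStep δ) none = none := by
    induction w with
    | nil => rfl
    | cons _ _ ih => exact ih
  rw [pfaRun, List.foldl_append, ← pfaRun]
  cases pfaRun δ q u with
  | none => exact foldl_none v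
  | some r => rfl

theorem pfaRun_singleton (q : Q) (a : σ) : pfaRun δ q [a] = δ q a := rfl

theorem pfaRun_cons (q : Q) (a : σ) (w : List σ) :
    pfaRun δ q (a :: w) = (δ q a).bind (pfaRun δ · w) :=
  pfaRun_append δ q [a] w

variable {δ}

theorem isSome_pfaRun_replicate {s : σ} (hs : ∀ q, (δ q s).isSome) (k : ℕ) (q : Q) :
    (pfaRun δ q (List.replicate k s)).isSome := by
  induction k generalizing q with
  | zero => rfl
  | succ k ih =>
    obtain ⟨r, hr⟩ := Option.isSome_iff_exists.1 (hs q)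
    rw [List.replicate_succ, pfaRun_cons, hr]
    exact ih r

/-- The PFA `δ` with its states renamed along `φ`. -/
def pfaRelabel (φ : Q ≃ S) (δ : Q → σ → Option Q) (x : S) (a : σ) : Option S :=
  (δ (φ.symm x) a).map φ

theorem pfaRun_pfaRelabel (φ : Q ≃ S) (q : Q) (w : List σ) :
    pfaRun (pfaRelabel φ δ) (φ q) w = (pfaRun δ q w).map φ := by
  induction w generalizing q with
  | nil => rfl
  | cons a w ih =>
    rw [pfaRun_cons, pfaRun_cons, pfaRelabel, φ.symm_apply_apply]
    cases δ q a with
    | none => rfl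
    | some r => exact ih r

theorem isCareSyncWord_pfaRelabel_iff (φ : Q ≃ S) {w : List σ} :
    IsCareSyncWord (pfaRelabel φ δ) w ↔ IsCareSyncWord δ w := by
  simp [IsCareSyncWord, φ.surjective.exists, φ.surjective.forall, pfaRun_pfaRelabel]

theorem PFATransitive.pfaRelabel (hδ : PFATransitive δ) (φ : Q ≃ S) :
    PFATransitive (pfaRelabel φ δ) := by
  simpa [PFATransitive, φ.surjective.forall, pfaRun_pfaRelabel] using hδ

end Run

section CounterState

variable {Q : Type*} {A : Set Q} {K : ℕ}

/-- States of `Q` with a counter in `{0, …, K}` that is kept only outside `A`: `.inl q` is `q` with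
counter `0`, or with any counter when `q ∈ A`, and `.inr (q, j)` is `q` with counter `j + 1`. -/
abbrev CounterState (A : Set Q) (K : ℕ) : Type _ := Q ⊕ (↥Aᶜ × Fin K)

namespace CounterState

/-- The underlying state of `Q`. -/
def base : CounterState A K → Q := Sum.elim id fun x => x.1

/-- The value of the counter, set to `0` where the counter is not kept. -/
def counter : CounterState A K → Fin (K + 1) := Sum.elim (fun _ => 0) fun x => x.2.succ

open Classical in
/-- The state `q` with counter `i`, which is forgotten if `q ∈ A`. -/
noncomputable def of (q : Q) (i : Fin (K + 1)) : CounterState A K :=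
  Fin.cases (.inl q) (fun j => if hq : q ∈ A then .inl q else .inr (⟨q, hq⟩, j)) i

theorem of_of_mem {q : Q} (hq : q ∈ A) (i : Fin (K + 1)) :
    (of q i : CounterState A K) = .inl q := by
  cases i using Fin.cases <;> simp [of, hq]

theorem base_of (q : Q) (i : Fin (K + 1)) : (of q i : CounterState A K).base = q := by
  cases i using Fin.cases <;> by_cases hq : q ∈ A <;> simp [of, base, hq]

theorem counter_of {q : Q} (hq : q ∉ A) (i : Fin (K + 1)) :
    (of q i : CounterState A K).counter = i := by
  cases i using Fin.cases <;> simp [of, counter, hq]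

theorem of_base_counter (x : CounterState A K) : of x.base x.counter = x := by
  obtain q | ⟨⟨q, hq⟩, j⟩ := x
  · rfl
  · exact dif_neg hq

end CounterState

end CounterState

section CounterPFA

open CounterState

variable {Q σ : Type*} {A : Set Q} {K : ℕ} {δ : Q → σ → Option Q} {s : σ} {a : Fin (K + 1) → σ}

/-- The two-symbol PFA simulating `δ`. Symbol `0` advances the counter, or applies `s` and resets
the counter if it has its last value; symbol `1` applies `a i`, where `i` is the value of the
counter, and resets the counter. -/
noncomputable def counterPFA (A : Set Q) (δ : Q → σ → Option Q) (s : σ) (a : Fin (K + 1) → σ)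
    (x : CounterState A K) : Fin 2 → Option (CounterState A K) :=
  ![Fin.lastCases ((δ x.base s).map .inl) (fun i => some (of x.base i.succ)) x.counter,
    (δ x.base (a x.counter)).map .inl]

theorem isSome_counterPFA (hδ : ∀ q b, (δ q b).isSome) (x : CounterState A K) (c : Fin 2) :
    (counterPFA A δ s a x c).isSome := by
  match c with
  | 0 => cases h : x.counter using Fin.lastCases <;> simp [counterPFA, h, hδ]
  | 1 => simp [counterPFA, hδ]

theorem counterPFA_of_one (hA : ∀ q ∈ A, ∀ i j, δ q (a i) = δ q (a j)) (q : Q) (i : Fin (K + 1)) :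
    counterPFA A δ s a (of q i) 1 = (δ q (a i)).map .inl := by
  by_cases hq : q ∈ A
  · simp [counterPFA, base_of, hA q hq _ i]
  · simp [counterPFA, base_of, counter_of hq]

variable (hs : ∀ q ∈ A, δ q s = some q)
include hs

theorem counterPFA_inl_zero_of_mem {q : Q} (hq : q ∈ A) :
    counterPFA A δ s a (.inl q) 0 = some (.inl q) := by
  cases h : counter (A := A) (K := K) (.inl q) using Fin.lastCases <;>
    simp [counterPFA, h, base, hs q hq, of_of_mem hq]

theorem counterPFA_of_castSucc_zero (q : Q) (i : Fin K) :
    counterPFA A δ s a (of q i.castSucc) 0 = some (of q i.succ) := by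
  by_cases hq : q ∈ A
  · simp only [of_of_mem hq, counterPFA_inl_zero_of_mem hs hq]
  · simp [counterPFA, base_of, counter_of hq]

theorem counterPFA_of_last_zero (q : Q) :
    counterPFA A δ s a (of q (Fin.last K)) 0 = (δ q s).map .inl := by
  by_cases hq : q ∈ A
  · simp only [of_of_mem hq, counterPFA_inl_zero_of_mem hs hq, hs q hq, Option.map_some]
  · simp [counterPFA, base_of, counter_of hq]

theorem pfaRun_counterPFA_advance (q : Q) (i : Fin (K + 1)) :
    pfaRun (counterPFA A δ s a) (.inl q) (List.replicate i 0) = some (of q i) := by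
  induction i using Fin.induction with
  | zero => rfl
  | succ i ih =>
    rw [Fin.val_succ, List.replicate_succ', pfaRun_append, ← Fin.val_castSucc, ih,
      Option.bind_some, pfaRun_singleton, counterPFA_of_castSucc_zero hs]

theorem pfaRun_counterPFA_wrap (q : Q) (i : Fin (K + 1)) :
    pfaRun (counterPFA A δ s a) (of q i) (List.replicate (K + 1 - i) 0) = (δ q s).map .inl := by
  induction i using Fin.reverseInduction with
  | last =>
    rw [Fin.val_last, Nat.add_sub_cancel_left, List.replicate_one, pfaRun_singleton,
      counterPFA_of_last_zero hs]
  | cast i ih =>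
    rw [Fin.val_castSucc, Nat.succ_sub i.isLt.le, List.replicate_succ, pfaRun_cons,
      counterPFA_of_castSucc_zero hs, Option.bind_some, ← ih, Fin.val_succ, Nat.add_sub_add_right]

theorem pfaRun_counterPFA_cycle (q : Q) (i : Fin (K + 1)) :
    pfaRun (counterPFA A δ s a) (of q i) (List.replicate (K + 1) 0) = (δ q s).map (of · i) := by
  rw [← Nat.sub_add_cancel i.isLt.le, List.replicate_add, pfaRun_append,
    pfaRun_counterPFA_wrap hs]
  cases δ q s with
  | none => rfl
  | some r => exact pfaRun_counterPFA_advance hs r i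

theorem pfaRun_counterPFA_cycles (p : ℕ) (q : Q) (i : Fin (K + 1)) :
    pfaRun (counterPFA A δ s a) (of q i) (List.replicate ((K + 1) * p) 0) =
      (pfaRun δ q (List.replicate p s)).map (of · i) := by
  induction p generalizing q with
  | zero => rfl
  | succ p ih =>
    rw [Nat.mul_succ, Nat.add_comm, List.replicate_add, pfaRun_append,
      pfaRun_counterPFA_cycle hs, List.replicate_succ, pfaRun_cons]
    cases δ q s with
    | none => rfl
    | some r => exact ih r

variable (hA : ∀ q ∈ A, ∀ i j, δ q (a i) = δ q (a j))
include hA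

theorem exists_pfaRun_eq_pfaRun_counterPFA (w : List (Fin 2)) (i : Fin (K + 1)) :
    ∃ v : List σ, v.length ≤ w.length ∧
      ∃ j, ∀ q, pfaRun (counterPFA A δ s a) (of q i) w = (pfaRun δ q v).map (of · j) := by
  induction w generalizing i with
  | nil => exact ⟨[], le_rfl, i, fun _ => rfl⟩
  | cons c w ih =>
    have apply_symbol {b : σ} (h : ∀ q, counterPFA A δ s a (of q i) c = (δ q b).map .inl) :
        ∃ v : List σ, v.length ≤ (c :: w).length ∧
          ∃ j, ∀ q, pfaRun (counterPFA A δ s a) (of q i) (c :: w) =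
            (pfaRun δ q v).map (of · j) := by
      obtain ⟨v, hv, j, hj⟩ := ih 0
      refine ⟨b :: v, Nat.succ_le_succ hv, j, fun q => ?_⟩
      rw [pfaRun_cons, pfaRun_cons, h]
      cases δ q b with
      | none => rfl
      | some r => exact hj r
    match c with
    | 0 =>
      cases i using Fin.lastCases with
      | last => exact apply_symbol (counterPFA_of_last_zero hs)
      | cast i =>
        obtain ⟨v, hv, j, hj⟩ := ih i.succ
        refine ⟨v, Nat.le_succ_of_le hv, j, fun q => ?_⟩
        rw [pfaRun_cons, counterPFA_of_castSucc_zero hs, Option.bind_some, hj]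
    | 1 => exact apply_symbol (counterPFA_of_one hA · i)

theorem exists_isCareSyncWord_length_le_of_counterPFA {w : List (Fin 2)}
    (hw : IsCareSyncWord (counterPFA A δ s a) w) :
    ∃ v, IsCareSyncWord δ v ∧ v.length ≤ w.length := by
  obtain ⟨x, hx⟩ := hw
  obtain ⟨v, hv, j, hj⟩ := exists_pfaRun_eq_pfaRun_counterPFA hs hA w 0
  refine ⟨v, ⟨x.base, fun q => ?_⟩, hv⟩
  obtain ⟨r, hr, rfl⟩ := Option.map_eq_some_iff.1 ((hj q).symm.trans (hx (.inl q)))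
  rw [hr, base_of]

variable (ha : ∀ b, b ≠ s → ∃ i, a i = b)
include ha

theorem exists_pfaRun_counterPFA_eq_symbol (b : σ) :
    ∃ u, ∀ q, pfaRun (counterPFA A δ s a) (.inl q) u = (δ q b).map .inl := by
  obtain rfl | hb := eq_or_ne b s
  · exact ⟨_, (pfaRun_counterPFA_wrap hs · 0)⟩
  · obtain ⟨i, rfl⟩ := ha b hb
    refine ⟨List.replicate i 0 ++ [1], fun q => ?_⟩
    rw [pfaRun_append, pfaRun_counterPFA_advance hs, Option.bind_some, pfaRun_singleton,
      counterPFA_of_one hA]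

theorem exists_pfaRun_counterPFA_eq_pfaRun (v : List σ) :
    ∃ w, ∀ q, pfaRun (counterPFA A δ s a) (.inl q) w = (pfaRun δ q v).map .inl := by
  induction v with
  | nil => exact ⟨[], fun _ => rfl⟩
  | cons b v ih =>
    obtain ⟨w, hw⟩ := ih
    obtain ⟨u, hu⟩ := exists_pfaRun_counterPFA_eq_symbol hs hA ha b
    refine ⟨u ++ w, fun q => ?_⟩
    rw [pfaRun_append, pfaRun_cons, hu]
    cases δ q b with
    | none => rfl
    | some r => exact hw r

variable (hcomplete : ∀ q, (δ q s).isSome)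
include hcomplete

theorem exists_isCareSyncWord_counterPFA {p : ℕ}
    (hp : ∀ q q' b, pfaRun δ q (List.replicate p s) = some q' → (δ q' b).isSome) {v : List σ}
    (hv : IsCareSyncWord δ v) : ∃ w, IsCareSyncWord (counterPFA A δ s a) w := by
  obtain ⟨r₀, hr₀⟩ := hv
  obtain ⟨w, hw⟩ := exists_pfaRun_counterPFA_eq_pfaRun hs hA ha v
  refine ⟨List.replicate ((K + 1) * p) 0 ++ 1 :: w, .inl r₀, fun x => ?_⟩
  obtain ⟨q, hq⟩ := Option.isSome_iff_exists.1 (isSome_pfaRun_replicate hcomplete p x.base)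
  obtain ⟨r, hr⟩ := Option.isSome_iff_exists.1 (hp x.base q (a x.counter) hq)
  rw [← of_base_counter x, pfaRun_append, pfaRun_counterPFA_cycles hs, hq, Option.map_some,
    Option.bind_some, pfaRun_cons, counterPFA_of_one hA, hr, Option.map_some, Option.bind_some, hw,
    hr₀, Option.map_some]

theorem PFATransitive.counterPFA (hδ : PFATransitive δ) : PFATransitive (counterPFA A δ s a) := by
  intro x y
  obtain ⟨q, hq⟩ := Option.isSome_iff_exists.1 (hcomplete x.base)
  obtain ⟨v, hv⟩ := hδ q y.base
  obtain ⟨w, hw⟩ := exists_pfaRun_counterPFA_eq_pfaRun hs hA ha v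
  refine ⟨List.replicate (K + 1 - x.counter) 0 ++ (w ++ List.replicate y.counter 0), ?_⟩
  nth_rw 1 [← of_base_counter x]
  rw [pfaRun_append, pfaRun_counterPFA_wrap hs, hq, Option.map_some, Option.bind_some,
    pfaRun_append, hw, hv, Option.map_some, Option.bind_some, pfaRun_counterPFA_advance hs,
    of_base_counter]

end CounterPFA

/-- If `s` is the only symbol, the enumeration is the constant `s`. -/
theorem exists_enumeration_ne {σ : Type*} [Fintype σ] (s : σ) :
    ∃ a : Fin (Fintype.card σ - 2 + 1) → σ,
      (∀ b, b ≠ s → ∃ i, a i = b) ∧ ∀ i j, a i ≠ a j → a i ≠ s := by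
  classical
  obtain _ | _ := subsingleton_or_nontrivial σ
  · exact ⟨fun _ => s, fun b hb => (hb (Subsingleton.elim b s)).elim, fun _ _ h => (h rfl).elim⟩
  · have hcard : Fintype.card {b // b ≠ s} = Fintype.card σ - 2 + 1 := by
      have := Fintype.one_lt_card (α := σ)
      rw [Fintype.card_subtype_compl, Fintype.card_subtype_eq]
      lia
    let φ := Fintype.equivFinOfCardEq hcard
    exact ⟨fun i => φ.symm i, fun b hb => ⟨φ ⟨b, hb⟩, by simp⟩, fun i _ _ => (φ.symm i).2⟩

theorem reduction_to_two_symbols_general {Q S σ : Type*} [Fintype σ] (δ : Q → σ → Option Q)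
    (s : σ) (Q' : Set Q) (φ : Q ⊕ (↥Q'ᶜ × Fin (Fintype.card σ - 2)) ≃ S) (p : ℕ)
    (hcomplete : ∀ q, (δ q s).isSome)
    (hp : ∀ q q' a, pfaRun δ q (List.replicate p s) = some q' → (δ q' a).isSome)
    (hQ's : ∀ q ∈ Q', δ q s = some q)
    (hQ'ab : ∀ q ∈ Q', ∀ a b, a ≠ s → b ≠ s → δ q a = δ q b) :
    ∃ δ₂ : S → Fin 2 → Option S,
      ((∃ v, IsCareSyncWord δ v) → ∃ w, IsCareSyncWord δ₂ w) ∧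
      (∀ w, IsCareSyncWord δ₂ w → ∃ v, IsCareSyncWord δ v ∧ v.length ≤ w.length) ∧
      ((∀ q a, (δ q a).isSome) → ∀ x c, (δ₂ x c).isSome) ∧
      (PFATransitive δ → PFATransitive δ₂) := by
  obtain ⟨a, ha, hne⟩ := exists_enumeration_ne s
  have hA : ∀ q ∈ Q', ∀ i j, δ q (a i) = δ q (a j) := fun q hq i j => by
    by_cases hij : a i = a j
    · rw [hij]
    · exact hQ'ab q hq _ _ (hne i j hij) (hne j i (Ne.symm hij))
  refine ⟨pfaRelabel φ (counterPFA Q' δ s a), ?_, ?_, ?_, ?_⟩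
  · rintro ⟨v, hv⟩
    simpa only [isCareSyncWord_pfaRelabel_iff] using
      exists_isCareSyncWord_counterPFA hQ's hA ha hcomplete hp hv
  · intro w hw
    exact exists_isCareSyncWord_length_le_of_counterPFA hQ's hA
      ((isCareSyncWord_pfaRelabel_iff φ).1 hw)
  · intro hδ x c
    simpa only [pfaRelabel, Option.isSome_map] using isSome_counterPFA hδ (φ.symm x) c
  · intro hδ
    exact (hδ.counterPFA hQ's hA ha hcomplete).pfaRelabel φ

/-- Reduction to two symbols: if `P = (Q,Σ,δ)` is a carefully synchronizing PFA with
`n` states, `m` symbols and shortest carefully synchronizing word length `f`, and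
`s ∈ Σ`, `Q' ⊆ Q` satisfy
(1) `s` is complete and all symbols are defined on `Qs^p` for some `p`,
(2) `qs = q` for all `q ∈ Q'`,
(3) `qa = qb` for all `q ∈ Q'` and all `a, b ∈ Σ∖{s}`,
then with `n' = n − |Q'|` there is a carefully synchronizing PFA on `n + n'·(m−2)`
states and two symbols with shortest carefully synchronizing word length at least `f`,
which is deterministic and/or transitive if `P` is. -/
theorem reduction_to_two_symbols {Q σ : Type*} [Fintype Q] [DecidableEq Q] [Fintype σ]
    (δ : Q → σ → Option Q) (n m : ℕ)
    (hn : Fintype.card Q = n) (hm : Fintype.card σ = m)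
    (f : ℕ) (w₀ : List σ) (hw₀ : IsCareSyncWord δ w₀) (hw₀len : w₀.length = f)
    (hmin : ∀ w : List σ, IsCareSyncWord δ w → f ≤ w.length)
    (s : σ) (Q' : Finset Q) (p : ℕ)
    (hcomplete : ∀ q : Q, (δ q s).isSome)
    (hp : ∀ q q' : Q, ∀ a : σ,
      pfaRun δ q (List.replicate p s) = some q' → (δ q' a).isSome)
    (hQ's : ∀ q ∈ Q', δ q s = some q)
    (hQ'ab : ∀ q ∈ Q', ∀ a b : σ, a ≠ s → b ≠ s → δ q a = δ q b)
    (n' : ℕ) (hn' : n' = n - Q'.card) :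
    ∃ δ₂ : Fin (n + n' * (m - 2)) → Fin 2 → Option (Fin (n + n' * (m - 2))),
      (∃ w : List (Fin 2), IsCareSyncWord δ₂ w) ∧
      (∀ w : List (Fin 2), IsCareSyncWord δ₂ w → f ≤ w.length) ∧
      ((∀ (q : Q) (a : σ), (δ q a).isSome) → ∀ (q₂ : Fin (n + n' * (m - 2))) (x : Fin 2),
        (δ₂ q₂ x).isSome) ∧
      (PFATransitive δ → PFATransitive δ₂) := by
  subst hn hm hn'
  have hcard : Fintype.card (Q ⊕ (↥(Q' : Set Q)ᶜ × Fin (Fintype.card σ - 2))) =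
      Fintype.card Q + (Fintype.card Q - Q'.card) * (Fintype.card σ - 2) := by
    rw [Fintype.card_sum, Fintype.card_prod, Fintype.card_fin, Fintype.card_compl_set]
    simp
  obtain ⟨δ₂, hsync, hlength, htotal, htrans⟩ := reduction_to_two_symbols_general δ s Q'
    (Fintype.equivFinOfCardEq hcard) p hcomplete hp hQ's hQ'ab
  refine ⟨δ₂, hsync ⟨w₀, hw₀⟩, fun w hw => ?_, htotal, htrans⟩
  obtain ⟨v, hv, hvw⟩ := hlength w hw
  exact (hmin v hv).trans hvw
end

section
/- Let h ≥ 2 and k ≥ h+1. Then C^h A^{k−h} rewrites in one or more steps of the system R_h to C^h A^{k−h−1} B. Furthermore, the smallest possible number of →_{R_h} steps needed to rewrite C^h A^{k−h} to a string ending in B is exactly f_h(k), where f_h satisfies the recursion f_h(k) = 0 for 1 ≤ k ≤ h and f_h(k) = 1 + Σ_{j=1}^{h} f_h(k−j) for k ≥ h+1. -/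
/-- The three-letter alphabet {A, B, C}. -/
inductive Letter : Type
  | A
  | B
  | C
  deriving DecidableEq

open Letter

/-- The rules of the rewrite system `R_h`: `C^i B^{h−i} A → C^i A^{h−i} B`
for `i = 0,…,h`. -/
def RuleH (h : ℕ) (l r : List Letter) : Prop :=
  ∃ i ≤ h,
    l = List.replicate i C ++ List.replicate (h - i) B ++ [A] ∧
    r = List.replicate i C ++ List.replicate (h - i) A ++ [B]

/-- `u →_{R_h} v`: one rewrite step of the system `R_h`. -/
def StepH (h : ℕ) (u v : List Letter) : Prop :=
  ∃ u₁ u₂ l r, RuleH h l r ∧ u = u₁ ++ l ++ u₂ ∧ v = u₁ ++ r ++ u₂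

/-- `StepHN h n u v`: `u` rewrites to `v` in exactly `n` steps of `R_h`. -/
inductive StepHN (h : ℕ) : ℕ → List Letter → List Letter → Prop
  | refl (u : List Letter) : StepHN h 0 u u
  | tail {n : ℕ} {u v w : List Letter} :
      StepHN h n u v → StepH h v w → StepHN h (n + 1) u w

/-
Give position `j` (counted from `1`) the weight `f j`. Steps never move a letter `C`, so in a word
derived from `C^h A^m` every `C` stays in the first `h` positions, where `f` vanishes. The
recursion for `f` says that a step whose window contains `C`s of total weight zero raises the
total weight of the `B`s by exactly one. Hence the number of steps of a derivation from `C^h A^m`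
is the weight of the `B`s in the final word: a `B` in the last position `h + m` costs at least `f
(h + m)` steps, with equality when it is the only `B`. Such a derivation exists by induction on
`m`: turn the `A`s before the last one into `B`s from right to left, until a rule applies at the
end of the word.
-/

section LetterWeight

variable {α M : Type*} [DecidableEq α] [AddCommMonoid M]

/-- The sum of the position weights `f j` over the positions `j` at which the letter `c` occurs in a
word, the first letter of the word having position `p`. The offset `p` is a parameter so that the
weight of a concatenation splits. -/
def letterWeight (f : ℕ → M) (c : α) (p : ℕ) (u : List α) : M :=
  ((u.zipIdx p).map fun x => if x.1 = c then f x.2 else 0).sum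

theorem letterWeight_append (f : ℕ → M) (c : α) (p : ℕ) (u v : List α) :
    letterWeight f c p (u ++ v) = letterWeight f c p u + letterWeight f c (p + u.length) v := by
  simp [letterWeight, List.zipIdx_append]

theorem letterWeight_singleton_self (f : ℕ → M) (c : α) (p : ℕ) :
    letterWeight f c p [c] = f p := by
  simp [letterWeight]

theorem letterWeight_eq_zero_of_notMem (f : ℕ → M) {c : α} (p : ℕ) {u : List α} (hc : c ∉ u) :
    letterWeight f c p u = 0 := by
  refine List.sum_eq_zero fun a ha => ?_
  obtain ⟨x, hx, rfl⟩ := List.mem_map.mp ha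
  refine if_neg fun hxc => hc ?_
  rw [← hxc]
  exact List.fst_mem_of_mem_zipIdx hx

theorem letterWeight_replicate_self (f : ℕ → M) (c : α) (p n : ℕ) :
    letterWeight f c p (List.replicate n c) = ∑ j ∈ Finset.Ico p (p + n), f j := by
  induction n with
  | zero => simp [letterWeight]
  | succ n ih =>
    rw [List.replicate_succ', letterWeight_append, ih, letterWeight_singleton_self,
      List.length_replicate, ← add_assoc, Finset.sum_Ico_succ_top (Nat.le_add_right p n)]

end LetterWeight

theorem eq_one_add_sum_Ico_of_recursion {M : Type*} [AddCommMonoidWithOne M] {h : ℕ} {f : ℕ → M}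
    (hfrec : ∀ j : ℕ, h + 1 ≤ j → f j = 1 + ∑ i ∈ Finset.Icc 1 h, f (j - i))
    {q : ℕ} (hq : 1 ≤ q) : f (q + h) = 1 + ∑ j ∈ Finset.Ico q (q + h), f j := by
  rw [hfrec _ (by omega), ← Finset.Ico_add_one_right_eq_Icc,
    Finset.sum_Ico_reflect f 1 (by omega), show q + h + 1 - (h + 1) = q by omega,
    Nat.add_sub_cancel]

section Rules

variable {h : ℕ} {l r u v : List Letter}

theorem RuleH.length_eq (hlr : RuleH h l r) : r.length = l.length := by
  obtain ⟨i, -, rfl, rfl⟩ := hlr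
  simp

theorem RuleH.letterWeight_C_eq {M : Type*} [AddCommMonoid M] (f : ℕ → M)
    (hlr : RuleH h l r) (q : ℕ) : letterWeight f C q r = letterWeight f C q l := by
  obtain ⟨i, -, rfl, rfl⟩ := hlr
  have hA : C ∉ List.replicate (h - i) A ++ [B] := by simp
  have hB : C ∉ List.replicate (h - i) B ++ [A] := by simp
  simp only [List.append_assoc, letterWeight_append _ _ _ (List.replicate i C),
    letterWeight_eq_zero_of_notMem f _ hA, letterWeight_eq_zero_of_notMem f _ hB]

theorem RuleH.letterWeight_B_eq {M : Type*} [AddCommMonoidWithOne M] {f : ℕ → M} {q : ℕ}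
    (hf : f (q + h) = 1 + ∑ j ∈ Finset.Ico q (q + h), f j) (hlr : RuleH h l r) :
    letterWeight f B q r = letterWeight f C q l + letterWeight f B q l + 1 := by
  obtain ⟨i, hi, rfl, rfl⟩ := hlr
  have hlen : q + i + (h - i) = q + h := by omega
  have hr : letterWeight f B q (List.replicate i C ++ List.replicate (h - i) A ++ [B]) =
      f (q + h) := by
    rw [letterWeight_append, letterWeight_eq_zero_of_notMem f q (by simp),
      letterWeight_singleton_self, zero_add]
    simp [hi]
  have hC : letterWeight f C q (List.replicate i C ++ List.replicate (h - i) B ++ [A]) =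
      ∑ j ∈ Finset.Ico q (q + i), f j := by
    rw [List.append_assoc, letterWeight_append, letterWeight_replicate_self,
      letterWeight_eq_zero_of_notMem f _ (by simp), add_zero]
  have hB : letterWeight f B q (List.replicate i C ++ List.replicate (h - i) B ++ [A]) =
      ∑ j ∈ Finset.Ico (q + i) (q + h), f j := by
    rw [letterWeight_append, letterWeight_append, letterWeight_replicate_self,
      letterWeight_eq_zero_of_notMem f q (by simp), letterWeight_eq_zero_of_notMem f _ (by simp),
      zero_add, add_zero, List.length_replicate, hlen]
  rw [hr, hC, hB, Finset.sum_Ico_consecutive f (by omega) (by omega), hf, add_comm]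

theorem StepH.length_eq (huv : StepH h u v) : v.length = u.length := by
  obtain ⟨u₁, u₂, l, r, hlr, rfl, rfl⟩ := huv
  simp only [List.length_append, hlr.length_eq]

theorem StepH.append_right (huv : StepH h u v) (w : List Letter) :
    StepH h (u ++ w) (v ++ w) := by
  obtain ⟨u₁, u₂, l, r, hlr, rfl, rfl⟩ := huv
  exact ⟨u₁, u₂ ++ w, l, r, hlr, List.append_assoc .., List.append_assoc ..⟩

theorem StepH.letterWeight_C_eq {M : Type*} [AddCommMonoid M] (f : ℕ → M)
    (huv : StepH h u v) (p : ℕ) : letterWeight f C p v = letterWeight f C p u := by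
  obtain ⟨u₁, u₂, l, r, hlr, rfl, rfl⟩ := huv
  simp only [letterWeight_append, List.length_append, hlr.length_eq, hlr.letterWeight_C_eq f]

theorem StepH.letterWeight_B_eq {f : ℕ → ℕ}
    (hfrec : ∀ j : ℕ, h + 1 ≤ j → f j = 1 + ∑ i ∈ Finset.Icc 1 h, f (j - i))
    (huv : StepH h u v) (hu : letterWeight f C 1 u = 0) :
    letterWeight f B 1 v = letterWeight f B 1 u + 1 := by
  obtain ⟨u₁, u₂, l, r, hlr, rfl, rfl⟩ := huv
  have hrule := hlr.letterWeight_B_eq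
    (eq_one_add_sum_Ico_of_recursion hfrec (Nat.le_add_right 1 u₁.length))
  simp only [letterWeight_append, List.length_append, hlr.length_eq] at hu ⊢
  omega

end Rules

section Derivations

variable {h n : ℕ} {u v : List Letter}

theorem StepHN.length_eq (huv : StepHN h n u v) : v.length = u.length := by
  induction huv with
  | refl u => rfl
  | tail _ hstep ih => exact hstep.length_eq.trans ih

theorem StepHN.letterWeight_C_eq {M : Type*} [AddCommMonoid M] (f : ℕ → M)
    (huv : StepHN h n u v) (p : ℕ) : letterWeight f C p v = letterWeight f C p u := by
  induction huv with
  | refl u => rfl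
  | tail _ hstep ih => exact (hstep.letterWeight_C_eq f p).trans ih

theorem StepHN.letterWeight_B_eq {f : ℕ → ℕ}
    (hfrec : ∀ j : ℕ, h + 1 ≤ j → f j = 1 + ∑ i ∈ Finset.Icc 1 h, f (j - i))
    (huv : StepHN h n u v) (hu : letterWeight f C 1 u = 0) :
    letterWeight f B 1 v = letterWeight f B 1 u + n := by
  induction huv with
  | refl u => rfl
  | tail hderiv hstep ih =>
    rw [hstep.letterWeight_B_eq hfrec ((hderiv.letterWeight_C_eq f 1).trans hu), ih hu, add_assoc]

theorem exists_stepHN_of_transGen (huv : Relation.TransGen (StepH h) u v) :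
    ∃ n, StepHN h n u v := by
  induction huv with
  | single hstep => exact ⟨1, .tail (.refl _) hstep⟩
  | tail _ hstep ih =>
    obtain ⟨n, hn⟩ := ih
    exact ⟨n + 1, .tail hn hstep⟩

theorem letterWeight_C_replicate_C_append_replicate_A {M : Type*} [AddCommMonoid M] {f : ℕ → M}
    (hf0 : ∀ j : ℕ, 1 ≤ j → j ≤ h → f j = 0) (m : ℕ) :
    letterWeight f C 1 (List.replicate h C ++ List.replicate m A) = 0 := by
  rw [letterWeight_append, letterWeight_replicate_self,
    letterWeight_eq_zero_of_notMem f _ (by simp), add_zero]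
  refine Finset.sum_eq_zero fun j hj => ?_
  obtain ⟨hj1, hjh⟩ := Finset.mem_Ico.mp hj
  exact hf0 j hj1 (by omega)

theorem StepHN.eq_letterWeight_B_add {f : ℕ → ℕ}
    (hf0 : ∀ j : ℕ, 1 ≤ j → j ≤ h → f j = 0)
    (hfrec : ∀ j : ℕ, h + 1 ≤ j → f j = 1 + ∑ i ∈ Finset.Icc 1 h, f (j - i))
    {m : ℕ} {w : List Letter}
    (hderiv : StepHN h n (List.replicate h C ++ List.replicate m A) (w ++ [B])) :
    n = letterWeight f B 1 w + f (h + m) := by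
  have hlen : 1 + w.length = h + m := by
    simpa [add_comm] using hderiv.length_eq
  have hstart : B ∉ List.replicate h C ++ List.replicate m A := by simp
  have hB := hderiv.letterWeight_B_eq hfrec
    (letterWeight_C_replicate_C_append_replicate_A hf0 m)
  rw [letterWeight_eq_zero_of_notMem f 1 hstart, zero_add, letterWeight_append, hlen,
    letterWeight_singleton_self] at hB
  exact hB.symm

end Derivations

section Reachability

variable {h : ℕ}

theorem reflTransGen_stepH_append_right {u v : List Letter}
    (huv : Relation.ReflTransGen (StepH h) u v) (w : List Letter) :
    Relation.ReflTransGen (StepH h) (u ++ w) (v ++ w) :=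
  huv.lift (· ++ w) fun _ _ hstep => hstep.append_right w

theorem reflTransGen_append_replicate_B {u : List Letter} {a j : ℕ}
    (hlast : ∀ i < a + j, Relation.ReflTransGen (StepH h)
      (u ++ List.replicate (i + 1) A) (u ++ List.replicate i A ++ [B])) :
    Relation.ReflTransGen (StepH h) (u ++ List.replicate (a + j + 1) A)
      (u ++ List.replicate a A ++ List.replicate j B ++ [A]) := by
  induction j generalizing a with
  | zero => simp [List.replicate_succ', Relation.ReflTransGen.refl]
  | succ j ih =>
    have hprefix := ih (a := a + 1) fun i hi => hlast i (by omega)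
    have hturn := reflTransGen_stepH_append_right (hlast a (by omega)) (List.replicate j B ++ [A])
    rw [show a + 1 + j + 1 = a + (j + 1) + 1 by omega] at hprefix
    exact hprefix.trans (by simpa [List.replicate_succ] using hturn)

theorem stepH_append_replicate_B (u : List Letter) {i : ℕ} (hi : i ≤ h) :
    StepH h (u ++ List.replicate i C ++ List.replicate (h - i) B ++ [A])
      (u ++ List.replicate i C ++ List.replicate (h - i) A ++ [B]) :=
  ⟨u, [], _, _, ⟨i, hi, rfl, rfl⟩, by simp, by simp⟩

theorem stepH_replicate_C_append_replicate_A (a : ℕ) :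
    StepH h (List.replicate h C ++ List.replicate a A ++ List.replicate h B ++ [A])
      (List.replicate h C ++ List.replicate (a + h) A ++ [B]) := by
  simpa using stepH_append_replicate_B (List.replicate h C ++ List.replicate a A) (Nat.zero_le h)

theorem stepH_replicate_C_append_replicate_B {m : ℕ} (hm : m ≤ h) :
    StepH h (List.replicate h C ++ List.replicate m B ++ [A])
      (List.replicate h C ++ List.replicate m A ++ [B]) := by
  have hstep := stepH_append_replicate_B (List.replicate m C) (Nat.sub_le h m)
  rwa [List.replicate_append_replicate, Nat.add_sub_cancel' hm, Nat.sub_sub_self hm] at hstep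

theorem transGen_stepH_replicate_A (m : ℕ) :
    Relation.TransGen (StepH h) (List.replicate h C ++ List.replicate (m + 1) A)
      (List.replicate h C ++ List.replicate m A ++ [B]) := by
  induction m using Nat.strong_induction_on with
  | _ m ih =>
    have hlast := fun i hi => (ih i hi).to_reflTransGen
    rcases le_total h m with hhm | hmh
    · obtain ⟨a, rfl⟩ := Nat.exists_eq_add_of_le' hhm
      exact .tail' (reflTransGen_append_replicate_B hlast) (stepH_replicate_C_append_replicate_A a)
    · refine .tail' ?_ (stepH_replicate_C_append_replicate_B hmh)
      simpa using reflTransGen_append_replicate_B (a := 0) (j := m) (by simpa using hlast)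

end Reachability

/-- For `h ≥ 2` and `k ≥ h+1`: `C^h A^{k−h} →_{R_h}^+ C^h A^{k−h−1} B`, and the smallest
possible number of `→_{R_h}` steps needed to rewrite `C^h A^{k−h}` to a string ending
in `B` is exactly `f_h(k)`, where `f_h(k) = 0` for `1 ≤ k ≤ h` and
`f_h(k) = 1 + Σ_{j=1}^{h} f_h(k−j)` for `k ≥ h+1`. -/
theorem Rh_min_steps (h k : ℕ) (hh : 2 ≤ h) (hk : h + 1 ≤ k)
    (f : ℕ → ℕ)
    (hf0 : ∀ j : ℕ, 1 ≤ j → j ≤ h → f j = 0)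
    (hfrec : ∀ j : ℕ, h + 1 ≤ j → f j = 1 + ∑ i ∈ Finset.Icc 1 h, f (j - i)) :
    Relation.TransGen (StepH h)
        (List.replicate h C ++ List.replicate (k - h) A)
        (List.replicate h C ++ List.replicate (k - h - 1) A ++ [B]) ∧
      (∃ v : List Letter,
          StepHN h (f k) (List.replicate h C ++ List.replicate (k - h) A) v ∧
          v.getLast? = some B) ∧
      ∀ (n : ℕ) (v : List Letter),
        StepHN h n (List.replicate h C ++ List.replicate (k - h) A) v →
        v.getLast? = some B → f k ≤ n := by
  obtain ⟨m, rfl⟩ := Nat.exists_eq_add_of_le hk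
  have hlen : h + 1 + m = h + (m + 1) := by omega
  rw [hlen, Nat.add_sub_cancel_left, Nat.add_sub_cancel]
  have hreach := transGen_stepH_replicate_A (h := h) m
  refine ⟨hreach, ?_, ?_⟩
  · obtain ⟨n, hderiv⟩ := exists_stepHN_of_transGen hreach
    have hn := hderiv.eq_letterWeight_B_add hf0 hfrec
    rw [letterWeight_eq_zero_of_notMem f 1 (by simp), zero_add] at hn
    exact ⟨_, hn ▸ hderiv, List.getLast?_concat⟩
  · intro n v hderiv hv
    obtain ⟨w, rfl⟩ := List.getLast?_eq_some_iff.mp hv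
    rw [hderiv.eq_letterWeight_B_add hf0 hfrec]
    exact Nat.le_add_left _ _
end
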